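/- Let f : E → ℝ be twice continuously differentiable and ℤⁿ-periodic, let A : E → ℝ be continuous with A x > 0 for all x, and let c be a real constant with c < 0. If Δ f x = A x * f x + c for all x ∈ E, then f x > 0 for every x ∈ E (in particular f is nonnegative). -/

import Mathlib

/-- The Laplacian of `f` at `x`: the sum of the pure second directional derivatives of `f`
at `x` along the standard orthonormal basis directions of `EuclideanSpace ℝ (Fin n)`. -/
noncomputable def laplacian {n : ℕ} (f : EuclideanSpace ℝ (Fin n) → ℝ)
    (x : EuclideanSpace ℝ (Fin n)) : ℝ :=
  ∑ i : Fin n, (iteratedFDeriv ℝ 2 f x)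
    ![EuclideanSpace.single i (1 : ℝ), EuclideanSpace.single i (1 : ℝ)]

/-- Second-order necessary condition for a local minimum of a function of one real variable. -/
theorem IsLocalMin.deriv_deriv_nonneg {g : ℝ → ℝ} {a : ℝ} (h : IsLocalMin g a)
    (hg : ContinuousAt g a) : 0 ≤ deriv (deriv g) a := by
  by_contra! hneg
  have hmax : IsLocalMax g a := isLocalMax_of_deriv_deriv_neg hneg h.deriv_eq_zero hg
  have hconst : g =ᶠ[nhds a] fun _ => g a := by
    filter_upwards [h, hmax] with y h₁ h₂ using le_antisymm h₂ h₁
  have hzero : deriv (deriv g) a = 0 := by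
    rw [hconst.deriv.deriv_eq]
    simp
  exact hneg.ne hzero

/-- Second-order necessary condition for a local minimum, along a direction `v`. -/
theorem IsLocalMin.iteratedFDeriv_two_nonneg {F : Type*} [NormedAddCommGroup F]
    [NormedSpace ℝ F] {f : F → ℝ} {x : F} (h : IsLocalMin f x) (hf : ContDiff ℝ 2 f) (v : F) :
    0 ≤ iteratedFDeriv ℝ 2 f x ![v, v] := by
  have hline : ∀ t : ℝ, HasDerivAt (fun s : ℝ => x + s • v) v t := fun t => by
    simpa using ((hasDerivAt_id t).smul_const v).const_add x
  have hderiv : deriv (fun t : ℝ => f (x + t • v)) = fun t => fderiv ℝ f (x + t • v) v := by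
    ext t
    exact ((hf.differentiable (by norm_num) _).hasFDerivAt.comp_hasDerivAt t (hline t)).deriv
  have hfd : Differentiable ℝ (fderiv ℝ f) :=
    (hf.fderiv_right (m := 1) (by norm_num)).differentiable (by norm_num)
  have hderiv₂ : deriv (deriv fun t : ℝ => f (x + t • v)) 0 = iteratedFDeriv ℝ 2 f x ![v, v] := by
    rw [hderiv, iteratedFDeriv_two_apply]
    simpa using (((hfd _).hasFDerivAt.comp_hasDerivAt (0 : ℝ) (hline 0)).clm_apply
      (hasDerivAt_const (0 : ℝ) v)).deriv
  have hcont : Continuous fun t : ℝ => x + t • v := by fun_prop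
  have hmin : IsLocalMin (fun t : ℝ => f (x + t • v)) 0 := by
    have htendsto := hcont.tendsto 0
    rw [zero_smul, add_zero] at htendsto
    filter_upwards [htendsto.eventually h] with t ht
    simpa using ht
  rw [← hderiv₂]
  exact hmin.deriv_deriv_nonneg (hf.continuous.comp hcont).continuousAt

/-- A function that is periodic along the standard basis takes the same value at a point and at
its coordinatewise fractional part. -/
theorem EuclideanSpace.apply_toLp_fract_of_periodic {n : ℕ} {α : Type*}
    {f : EuclideanSpace ℝ (Fin n) → α}
    (hper : ∀ i, Function.Periodic f (EuclideanSpace.single i (1 : ℝ)))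
    (x : EuclideanSpace ℝ (Fin n)) :
    f (WithLp.toLp 2 fun i => Int.fract (x i)) = f x := by
  have hsub : ∀ s : Finset (Fin n),
      f (x - ∑ i ∈ s, ⌊x i⌋ • EuclideanSpace.single i (1 : ℝ)) = f x := by
    intro s
    induction s using Finset.induction_on with
    | empty => simp
    | insert i s hi ih =>
      rw [Finset.sum_insert hi, add_comm, ← sub_sub, (hper i).sub_zsmul_eq, ih]
  rw [← hsub Finset.univ]
  congr 1
  ext j
  simp [Pi.single_apply]

/-- A continuous function that is periodic along the standard basis attains its minimum. -/
theorem EuclideanSpace.exists_forall_le_of_periodic {n : ℕ} {f : EuclideanSpace ℝ (Fin n) → ℝ}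
    (hf : Continuous f) (hper : ∀ i, Function.Periodic f (EuclideanSpace.single i (1 : ℝ))) :
    ∃ x₀, ∀ x, f x₀ ≤ f x := by
  have hcompact : IsCompact (Set.Icc (0 : Fin n → ℝ) 1) := isCompact_Icc
  obtain ⟨y, -, hy⟩ := hcompact.exists_isMinOn (Set.nonempty_Icc.2 zero_le_one)
    (hf.comp (PiLp.continuous_toLp 2 fun _ : Fin n => ℝ)).continuousOn
  refine ⟨WithLp.toLp 2 y, fun x => ?_⟩
  rw [← apply_toLp_fract_of_periodic hper x]
  exact hy ⟨fun i => Int.fract_nonneg _, fun i => (Int.fract_lt_one _).le⟩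

theorem pos_of_laplacian_eq_pos_mul_add_neg_const {n : ℕ} (hn : 0 < n)
    (f : EuclideanSpace ℝ (Fin n) → ℝ) (hf : ContDiff ℝ 2 f)
    (hper : ∀ (x : EuclideanSpace ℝ (Fin n)) (i : Fin n),
      f (x + EuclideanSpace.single i (1 : ℝ)) = f x)
    (A : EuclideanSpace ℝ (Fin n) → ℝ) (hA : Continuous A)
    (hApos : ∀ x, 0 < A x)
    (c : ℝ) (hc : c < 0)
    (heq : ∀ x, laplacian f x = A x * f x + c) :
    ∀ x, 0 < f x := by
  obtain ⟨x₀, hx₀⟩ := EuclideanSpace.exists_forall_le_of_periodic hf.continuous fun i x => hper x i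
  have hmin : IsLocalMin f x₀ := Filter.Eventually.of_forall hx₀
  have hlap : 0 ≤ laplacian f x₀ :=
    Finset.sum_nonneg fun i _ => hmin.iteratedFDeriv_two_nonneg hf _
  rw [heq] at hlap
  exact fun x => (pos_of_mul_pos_right (by linarith) (hApos x₀).le).trans_le (hx₀ x)
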